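/- For the principal ideal perturbation family, the ratio ‖δ̇_{r,n}(t)‖ / ‖δ_{r,n}(t)‖, where δ_{r,n}(t) := e^{i f_{r,n} t} α_{r,n}(t), equals ( f_{r,n}² − 2 f_{r,n} · A_{r,n} + B_{r,n} )^{1/2} with A_{r,n} := (∑_q C(r+kq+n,n) ε^{2q} q)/(∑_q C(r+kq+n,n) ε^{2q}) and B_{r,n} := (∑_q C(r+kq+n,n) ε^{2q} q²)/(∑_q C(r+kq+n,n) ε^{2q}); and since f_{r,n} = A_{r,n}, this ratio equals (B_{r,n} − A_{r,n}²)^{1/2}, which is unbounded in n (growing like n^{1/2}). -/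

import Mathlib

open Filter

noncomputable section

/-- The Drury-Arveson space `H²₂`, modeled as `ℓ²(ℕ × ℕ)` via the orthonormal basis
of normalized monomials. -/
abbrev DruryArveson2 : Type := lp (fun _ : ℕ × ℕ => ℂ) 2

/-- The monomial `z₁^m z₂^n ∈ H²₂`; it has squared norm `ω_{m,n} = C(m+n, m)⁻¹`. -/
def mono (m n : ℕ) : DruryArveson2 :=
  (Real.sqrt (((m + n).choose m : ℝ)⁻¹) : ℂ) • lp.single 2 (m, n) 1

/-- `α_{r,n}(t) = ∑_q C(r+kq+n, n) ε^q e^{-iqt} z₁^{r+kq} z₂^n`. -/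
def alphaDA (k r n : ℕ) (ε t : ℝ) : DruryArveson2 :=
  ∑' q : ℕ, (((r + k * q + n).choose n : ℂ) * ε ^ q * Complex.exp (-(Complex.I * q * t))) •
    mono (r + k * q) n

/-- The orthogonal complement `I(t)^⊥` of the closure of the ideal `I(t) = ⟨z₁^k − ε e^{it}⟩`
in `H²₂`: the closed span of the `α_{r,n}(t)`, `0 ≤ r < k`, `n ≥ 0`. -/
def Iperp (k : ℕ) (ε t : ℝ) : Submodule ℂ DruryArveson2 :=
  (Submodule.span ℂ
    (Set.range fun p : Fin k × ℕ => alphaDA k p.1 p.2 ε t)).topologicalClosure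

instance (k : ℕ) (ε t : ℝ) : CompleteSpace (Iperp k ε t) :=
  (Submodule.isClosed_topologicalClosure _).completeSpace_coe

/-- `A_{r,n} = (∑_q C(r+kq+n,n) ε^{2q} q)/(∑_q C(r+kq+n,n) ε^{2q})`, the frequency
`f_{r,n}` of the parallel transport. -/
def momA (k : ℕ) (ε : ℝ) (r n : ℕ) : ℝ :=
  (∑' q : ℕ, ((r + k * q + n).choose n : ℝ) * ε ^ (2 * q) * q) /
    (∑' q : ℕ, ((r + k * q + n).choose n : ℝ) * ε ^ (2 * q))

/-- `B_{r,n} = (∑_q C(r+kq+n,n) ε^{2q} q²)/(∑_q C(r+kq+n,n) ε^{2q})`. -/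
def momB (k : ℕ) (ε : ℝ) (r n : ℕ) : ℝ :=
  (∑' q : ℕ, ((r + k * q + n).choose n : ℝ) * ε ^ (2 * q) * (q : ℝ) ^ 2) /
    (∑' q : ℕ, ((r + k * q + n).choose n : ℝ) * ε ^ (2 * q))

/-- `δ_{r,n}(t) = e^{i f_{r,n} t} α_{r,n}(t)`. -/
def deltaSec (k r n : ℕ) (ε t : ℝ) : DruryArveson2 :=
  Complex.exp (Complex.I * (momA k ε r n : ℝ) * t) • alphaDA k r n ε t

/-- `δ̇_{r,n}(t)`, the (termwise) `t`-derivative of `δ_{r,n}(t)`. -/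
def deltaDot (k r n : ℕ) (ε t : ℝ) : DruryArveson2 :=
  ∑' q : ℕ, (Complex.I * ((momA k ε r n : ℝ) - (q : ℂ)) *
      (((r + k * q + n).choose n : ℂ) * ε ^ q * Complex.exp (-(Complex.I * q * t))) *
      Complex.exp (Complex.I * (momA k ε r n : ℝ) * t)) •
    mono (r + k * q) n

/-- The generating function of `C(m+N, N)` restricted to the residue class `m ≡ ρ mod k`. -/
def residueSum (k : ℕ) (s : ℝ) (ρ : ZMod k) (N : ℕ) : ℝ :=
  ∑' m : ℕ, if (m : ZMod k) = ρ then ((m + N).choose N : ℝ) * s ^ m else 0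

lemma hasSum_residueSum {s : ℝ} (hs0 : 0 < s) (hs1 : s < 1) (k : ℕ) (ρ : ZMod k) (N : ℕ) :
    HasSum (fun m : ℕ => if (m : ZMod k) = ρ then ((m + N).choose N : ℝ) * s ^ m else 0)
      (residueSum k s ρ N) := by
  refine Summable.hasSum ?_
  have h : Summable fun m : ℕ => ((m + N).choose N : ℝ) * s ^ m :=
    summable_choose_mul_geometric_of_norm_lt_one N (by rwa [Real.norm_of_nonneg hs0.le])
  refine h.of_nonneg_of_le (fun m => ?_) (fun m => ?_)
  · split_ifs <;> positivity
  · split_ifs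
    · exact le_rfl
    · positivity

/-- Roots of unity filter. -/
lemma residueSum_eq_sum_addChar {s : ℝ} (hs0 : 0 < s) (hs1 : s < 1) (k : ℕ) [NeZero k]
    (ρ : ZMod k) (N : ℕ) :
    (k : ℂ) * (residueSum k s ρ N : ℂ) =
      ∑ ψ : AddChar (ZMod k) ℂ, ψ (-ρ) * (1 / (1 - ψ 1 * s) ^ (N + 1)) := by
  have h1 : HasSum (fun m : ℕ => (k : ℂ) *
      ((if (m : ZMod k) = ρ then ((m + N).choose N : ℝ) * s ^ m else 0 : ℝ) : ℂ))
      ((k : ℂ) * (residueSum k s ρ N : ℂ)) :=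
    (Complex.hasSum_ofReal.mpr (hasSum_residueSum hs0 hs1 k ρ N)).mul_left _
  have h2 : HasSum (fun m : ℕ => ∑ ψ : AddChar (ZMod k) ℂ,
      ψ (-ρ) * (((m + N).choose N : ℂ) * (ψ 1 * s) ^ m))
      (∑ ψ : AddChar (ZMod k) ℂ, ψ (-ρ) * (1 / (1 - ψ 1 * s) ^ (N + 1))) := by
    refine hasSum_sum fun ψ _ => HasSum.mul_left _ ?_
    refine hasSum_choose_mul_geometric_of_norm_lt_one N ?_
    rw [norm_mul, ψ.norm_apply, one_mul, Complex.norm_real, Real.norm_of_nonneg hs0.le]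
    exact hs1
  refine h1.unique (h2.congr_fun ?_)
  intro m
  have hψ (ψ : AddChar (ZMod k) ℂ) : ψ (-ρ) * (((m + N).choose N : ℂ) * (ψ 1 * s) ^ m) =
      ψ ((m : ZMod k) - ρ) * (((m + N).choose N : ℂ) * (s : ℂ) ^ m) := by
    have : ψ ((m : ZMod k) - ρ) = ψ 1 ^ m * ψ (-ρ) := by
      rw [sub_eq_add_neg, AddChar.map_add_eq_mul, ← AddChar.map_nsmul_eq_pow, nsmul_one]
    rw [this]; ring
  simp only [hψ]
  rw [← Finset.sum_mul, AddChar.sum_apply_eq_ite, ZMod.card]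
  simp only [sub_eq_zero]
  split_ifs <;> simp

lemma one_sub_lt_norm_one_sub_mul {s : ℝ} (hs0 : 0 < s) {z : ℂ} (hz : ‖z‖ = 1)
    (hz1 : z ≠ 1) : 1 - s < ‖1 - z * s‖ := by
  have hsq : z.re * z.re + z.im * z.im = 1 := by
    rw [← Complex.normSq_apply, Complex.normSq_eq_norm_sq, hz, one_pow]
  have hre : z.re < 1 := by
    rcases (Complex.re_le_norm z).lt_or_eq with h | h
    · rwa [hz] at h
    · rw [hz] at h
      refine absurd (Complex.ext h ?_) hz1
      rw [h] at hsq
      simpa using hsq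
  refine lt_of_pow_lt_pow_left₀ 2 (norm_nonneg _) ?_
  rw [← Complex.normSq_eq_norm_sq, Complex.normSq_apply]
  simp only [Complex.sub_re, Complex.one_re, Complex.mul_re, Complex.ofReal_re, Complex.ofReal_im,
    Complex.sub_im, Complex.one_im, Complex.mul_im]
  nlinarith [mul_pos hs0 (sub_pos.mpr hre)]

lemma tendsto_natCast_mul_residueSum_sub_one {s : ℝ} (hs0 : 0 < s) (hs1 : s < 1) (k : ℕ) [NeZero k]
    (ρ : ZMod k) :
    Tendsto (fun N : ℕ => (N : ℝ) * (k * (1 - s) ^ (N + 1) * residueSum k s ρ N - 1))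
      atTop (nhds 0) := by
  have hs : (1 - s : ℂ) ≠ 0 := by
    exact_mod_cast (sub_pos.mpr hs1).ne'
  have key (N : ℕ) : (((N : ℝ) * (k * (1 - s) ^ (N + 1) * residueSum k s ρ N - 1) : ℝ) : ℂ) =
      ∑ ψ ∈ (Finset.univ : Finset (AddChar (ZMod k) ℂ)).erase 1,
        ψ (-ρ) * ((1 - s) / (1 - ψ 1 * s)) * (N * ((1 - s) / (1 - ψ 1 * s)) ^ N) := by
    have h := residueSum_eq_sum_addChar hs0 hs1 k ρ N
    rw [← Finset.add_sum_erase _ _ (Finset.mem_univ (1 : AddChar (ZMod k) ℂ))] at h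
    simp only [AddChar.one_apply, one_mul] at h
    have h' : (k : ℂ) * (1 - s) ^ (N + 1) * residueSum k s ρ N - 1 =
        (1 - s) ^ (N + 1) * ∑ ψ ∈ (Finset.univ : Finset (AddChar (ZMod k) ℂ)).erase 1,
          ψ (-ρ) * (1 / (1 - ψ 1 * s) ^ (N + 1)) := by
      rw [mul_right_comm, h]
      field_simp
      ring
    push_cast
    rw [h', Finset.mul_sum, Finset.mul_sum]
    refine Finset.sum_congr rfl fun ψ _ => ?_
    rw [div_pow, pow_succ, pow_succ, one_div, mul_inv, div_eq_mul_inv, div_eq_mul_inv]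
    ring
  rw [← Filter.tendsto_ofReal_iff, Complex.ofReal_zero]
  refine Tendsto.congr (fun N => (key N).symm) ?_
  rw [← Finset.sum_const_zero (s := (Finset.univ : Finset (AddChar (ZMod k) ℂ)).erase 1)]
  refine tendsto_finsetSum _ fun ψ hψ => ?_
  rw [← mul_zero (ψ (-ρ) * ((1 - s) / (1 - ψ 1 * s)))]
  refine Tendsto.const_mul _ ?_
  rw [tendsto_zero_iff_norm_tendsto_zero]
  have hlt : ‖(1 - s : ℂ) / (1 - ψ 1 * s)‖ < 1 := by
    have h1 := one_sub_lt_norm_one_sub_mul hs0 (ψ.norm_apply 1)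
      ((AddChar.zmod_char_ne_one_iff k ψ).mp (Finset.ne_of_mem_erase hψ))
    have h2 : ‖(1 - s : ℂ)‖ = 1 - s := by
      rw [← Complex.ofReal_one, ← Complex.ofReal_sub, Complex.norm_real,
        Real.norm_of_nonneg (sub_pos.mpr hs1).le]
    rw [norm_div, h2, div_lt_one ((sub_pos.mpr hs1).trans h1)]
    exact h1
  simpa using tendsto_self_mul_const_pow_of_lt_one (norm_nonneg _) hlt

lemma choose_mul_descFactorial_add (m n i : ℕ) :
    (m + i + n).choose n * (m + i).descFactorial i =
      (n + 1).ascFactorial i * (m + (n + i)).choose (n + i) := by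
  have h1 := Nat.add_choose_mul_factorial_mul_factorial (m + i) n
  have h2 := Nat.add_choose_mul_factorial_mul_factorial m (n + i)
  have h3 := Nat.factorial_mul_descFactorial (Nat.le_add_left i m)
  have h4 := Nat.factorial_mul_ascFactorial n i
  rw [Nat.add_sub_cancel] at h3
  have h5 : m + (n + i) = m + i + n := by ring
  rw [h5] at h2 ⊢
  refine Nat.eq_of_mul_eq_mul_right (by positivity : 0 < n.factorial * m.factorial) ?_
  calc _ = (m + i + n).choose n * (m.factorial * (m + i).descFactorial i) * n.factorial := by ring
    _ = (m + i + n).choose (n + i) * m.factorial * (n.factorial * (n + 1).ascFactorial i) := by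
      rw [h3, h4, h1, h2]
    _ = _ := by ring

lemma hasSum_descFactorial_residueSum {s : ℝ} (hs0 : 0 < s) (hs1 : s < 1) (k : ℕ) (ρ : ZMod k)
    (n i : ℕ) :
    HasSum (fun m : ℕ => if (m : ZMod k) = ρ then
        ((m + n).choose n : ℝ) * s ^ m * m.descFactorial i else 0)
      ((n + 1).ascFactorial i * s ^ i * residueSum k s (ρ - i) (n + i)) := by
  rw [← hasSum_nat_add_iff' i, Finset.sum_eq_zero, sub_zero]
  · refine ((hasSum_residueSum hs0 hs1 k (ρ - i) (n + i)).mul_left _).congr_fun fun m => ?_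
    simp only [Nat.cast_add, eq_sub_iff_add_eq]
    split_ifs
    · have h : ((m + i + n).choose n : ℝ) * (m + i).descFactorial i =
        (n + 1).ascFactorial i * (m + (n + i)).choose (n + i) := by
        exact_mod_cast choose_mul_descFactorial_add m n i
      rw [mul_right_comm, h]
      ring
    · simp
  · intro m hm
    rw [Nat.descFactorial_of_lt (Finset.mem_range.mp hm)]
    simp

lemma hasSum_residueClass_iff {k r : ℕ} (hr : r < k) (f : ℕ → ℝ) (a : ℝ) :
    HasSum (fun m : ℕ => if (m : ZMod k) = r then f m else 0) a ↔
      HasSum (fun q : ℕ => f (r + k * q)) a := by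
  have hk : 0 < k := by omega
  have hinj : Function.Injective fun q : ℕ => r + k * q := fun x y h => by
    simpa [hk.ne'] using h
  rw [← hinj.hasSum_iff]
  · refine iff_of_eq (congrArg (HasSum · a) ?_)
    funext q
    simp
  · intro m hm
    rw [if_neg]
    intro h
    rw [ZMod.natCast_eq_natCast_iff', Nat.mod_eq_of_lt hr] at h
    exact hm ⟨m / k, by simp [← h, Nat.mod_add_div]⟩


/-- The `i`-th factorial moment of the weights `C(m+n, n) s^m` on the class `m ≡ r mod k`. -/
def residueMoment (k : ℕ) (s : ℝ) (r n i : ℕ) : ℝ :=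
  (n + 1).ascFactorial i * s ^ i * residueSum k s ((r : ZMod k) - i) (n + i)

lemma residueMoment_zero_pos {s : ℝ} (hs0 : 0 < s) (hs1 : s < 1) {k r : ℕ} (hr : r < k) (n : ℕ) :
    0 < residueMoment k s r n 0 := by
  have h := (hasSum_residueClass_iff hr _ _).mp
    (hasSum_descFactorial_residueSum hs0 hs1 k r n 0)
  refine lt_of_lt_of_eq (h.summable.tsum_pos (fun q => by positivity) 0 ?_) h.tsum_eq
  have : 0 < (r + k * 0 + n).choose n := Nat.choose_pos (Nat.le_add_left _ _)
  simp only [Nat.descFactorial_zero]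
  positivity

lemma hasSum_weight_moments {ε s : ℝ} (hs0 : 0 < s) (hs1 : s < 1) {k r : ℕ} (hr : r < k)
    (hs : s ^ k = ε ^ 2) (n : ℕ) :
    HasSum (fun q : ℕ => ((r + k * q + n).choose n : ℝ) * ε ^ (2 * q))
      (residueMoment k s r n 0 / s ^ r) ∧
    HasSum (fun q : ℕ => ((r + k * q + n).choose n : ℝ) * ε ^ (2 * q) * q)
      ((residueMoment k s r n 1 - r * residueMoment k s r n 0) / (s ^ r * k)) ∧
    HasSum (fun q : ℕ => ((r + k * q + n).choose n : ℝ) * ε ^ (2 * q) * (q : ℝ) ^ 2)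
      ((residueMoment k s r n 2 + (1 - 2 * r) * residueMoment k s r n 1 +
        r ^ 2 * residueMoment k s r n 0) / (s ^ r * k ^ 2)) := by
  have h (i : ℕ) : HasSum (fun q : ℕ => ((r + k * q + n).choose n : ℝ) * s ^ (r + k * q) *
      (r + k * q).descFactorial i) (residueMoment k s r n i) :=
    (hasSum_residueClass_iff hr _ _).mp (hasSum_descFactorial_residueSum hs0 hs1 k r n i)
  have hk : (k : ℝ) ≠ 0 := by
    have : k ≠ 0 := by omega
    exact_mod_cast this
  have hpow (q : ℕ) : s ^ (r + k * q) = s ^ r * ε ^ (2 * q) := by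
    rw [pow_add, pow_mul, hs, ← pow_mul]
  have hd (m : ℕ) : (m.descFactorial 2 : ℝ) = m ^ 2 - m := by
    cases m <;> simp [Nat.descFactorial]; ring
  refine ⟨((h 0).div_const _).congr_fun fun q => ?_,
    (((h 1).sub ((h 0).mul_left (r : ℝ))).div_const _).congr_fun fun q => ?_,
    ((((h 2).add ((h 1).mul_left (1 - 2 * r : ℝ))).add
      ((h 0).mul_left ((r : ℝ) ^ 2))).div_const _).congr_fun fun q => ?_⟩
  · rw [hpow]
    field_simp
    simp
  · rw [hpow]
    field_simp
    simp
    ring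
  · rw [hpow, hd]
    field_simp
    simp
    ring

lemma momB_sub_momA_sq {ε s : ℝ} (hs0 : 0 < s) (hs1 : s < 1) {k r : ℕ} (hr : r < k)
    (hs : s ^ k = ε ^ 2) (n : ℕ) :
    momB k ε r n - momA k ε r n ^ 2 =
      (residueMoment k s r n 2 / residueMoment k s r n 0 +
        residueMoment k s r n 1 / residueMoment k s r n 0 -
        (residueMoment k s r n 1 / residueMoment k s r n 0) ^ 2) / k ^ 2 := by
  obtain ⟨h0, h1, h2⟩ := hasSum_weight_moments hs0 hs1 hr hs n
  rw [momB, momA, h0.tsum_eq, h1.tsum_eq, h2.tsum_eq]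
  have hk : (k : ℝ) ≠ 0 := by
    have : k ≠ 0 := by omega
    exact_mod_cast this
  have hpos := (residueMoment_zero_pos hs0 hs1 hr n).ne'
  field_simp
  ring

lemma tendsto_natCast_mul_comp_add {u : ℕ → ℝ}
    (h : Tendsto (fun n : ℕ => (n : ℝ) * u n) atTop (nhds 0)) (i : ℕ) :
    Tendsto (fun n : ℕ => (n : ℝ) * u (n + i)) atTop (nhds 0) := by
  refine squeeze_zero_norm (fun n => ?_)
    (tendsto_zero_iff_norm_tendsto_zero.mp ((tendsto_add_atTop_iff_nat i).mpr h))
  rw [norm_mul, norm_mul]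
  gcongr
  rw [Real.norm_natCast, Real.norm_natCast]
  exact_mod_cast Nat.le_add_right n i

lemma tendsto_variance_of_residueMoment {s : ℝ} (hs0 : 0 < s) (hs1 : s < 1) {k r : ℕ}
    (hr : r < k) :
    Tendsto (fun n : ℕ => (residueMoment k s r n 2 / residueMoment k s r n 0 +
        residueMoment k s r n 1 / residueMoment k s r n 0 -
        (residueMoment k s r n 1 / residueMoment k s r n 0) ^ 2) / n)
      atTop (nhds (s / (1 - s) ^ 2)) := by
  have : NeZero k := ⟨by omega⟩
  set g : ℕ → ℕ → ℝ := fun i n =>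
    k * (1 - s) ^ (n + i + 1) * residueSum k s ((r : ZMod k) - i) (n + i) with hg
  have hng (i : ℕ) : Tendsto (fun n : ℕ => (n : ℝ) * (g i n - 1)) atTop (nhds 0) :=
    tendsto_natCast_mul_comp_add
      (tendsto_natCast_mul_residueSum_sub_one hs0 hs1 k ((r : ZMod k) - i)) i
  have hg1 (i : ℕ) : Tendsto (g i) atTop (nhds 1) := by
    have h := ((hng i).mul tendsto_inv_atTop_nhds_zero_nat).add_const 1
    rw [zero_mul, zero_add] at h
    refine h.congr' ?_
    filter_upwards [eventually_ne_atTop 0] with n hn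
    field_simp
    ring
  have hone : Tendsto (fun n : ℕ => ((n : ℝ) + 1) / n) atTop (nhds 1) := by
    have h := (tendsto_inv_atTop_nhds_zero_nat (𝕜 := ℝ)).const_add 1
    rw [add_zero] at h
    refine h.congr' ?_
    filter_upwards [eventually_ne_atTop 0] with n hn
    field_simp
  have hlim := hone.mul (((((((hng 2).mul (hg1 0)).add (hng 0)).sub
    ((hng 1).mul ((hg1 1).add_const 1))).add ((((hg1 2).mul (hg1 0)).const_mul 2).sub
      ((hg1 1).pow 2))).div ((hg1 0).pow 2) (by norm_num) |>.const_mul ((s / (1 - s)) ^ 2)).add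
    (((hg1 1).div (hg1 0) one_ne_zero).const_mul (s / (1 - s))))
  have hs : 1 - s ≠ 0 := (sub_pos.mpr hs1).ne'
  have hval : s / (1 - s) ^ 2 = 1 * ((s / (1 - s)) ^ 2 *
      ((0 * 1 + 0 - 0 * (1 + 1) + (2 * (1 * 1) - 1 ^ 2)) / 1 ^ 2) + s / (1 - s) * (1 / 1)) := by
    field_simp
    norm_num
  rw [hval]
  refine hlim.congr' ?_
  filter_upwards [eventually_ne_atTop 0] with n hn
  have hn' : (n : ℝ) ≠ 0 := by exact_mod_cast hn
  have hk : (k : ℝ) ≠ 0 := by exact_mod_cast NeZero.ne k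
  have hM (i : ℕ) : residueMoment k s r n i =
      (n + 1).ascFactorial i * s ^ i * g i n / (k * (1 - s) ^ (n + i + 1)) := by
    rw [residueMoment, hg]
    field_simp
  have hg0 : g 0 n ≠ 0 := by
    have h := (residueMoment_zero_pos hs0 hs1 hr n).ne'
    rw [hM] at h
    intro h'
    simp [h'] at h
  rw [hM, hM, hM]
  simp only [Nat.ascFactorial, Pi.div_apply]
  push_cast
  field_simp
  ring

lemma norm_mono_tsum_sq (k r n : ℕ) (hk : k ≠ 0) (b : ℕ → ℂ) {a : ℝ}
    (hb : HasSum (fun q => ‖b q‖ ^ 2 * ((r + k * q + n).choose n : ℝ)⁻¹) a) :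
    ‖∑' q : ℕ, b q • mono (r + k * q) n‖ ^ 2 = a := by
  have hinj : Function.Injective fun q : ℕ => ((r + k * q, n) : ℕ × ℕ) := fun x y h => by
    simpa [hk] using h
  have hv : Orthonormal ℂ fun q : ℕ => (lp.single 2 (r + k * q, n) (1 : ℂ) : DruryArveson2) := by
    rw [orthonormal_iff_ite]
    intro i j
    rw [lp.inner_single_left, lp.single_apply]
    simp [Pi.single_apply, hk]
  set c : ℕ → ℂ := fun q => b q * (Real.sqrt (((r + k * q + n).choose n : ℝ)⁻¹) : ℂ) with hc
  have hcn (q : ℕ) : ‖c q‖ ^ (2 : ENNReal).toReal =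
      ‖b q‖ ^ 2 * ((r + k * q + n).choose n : ℝ)⁻¹ := by
    rw [hc, ENNReal.toReal_ofNat, Real.rpow_ofNat, norm_mul, mul_pow, Complex.norm_real,
      Real.norm_of_nonneg (Real.sqrt_nonneg _), Real.sq_sqrt (by positivity)]
  have hmem : Memℓp c 2 := memℓp_gen (by simpa only [hcn] using hb.summable)
  have h1 : ∑' q : ℕ, b q • mono (r + k * q) n =
      hv.orthogonalFamily.linearIsometry ⟨c, hmem⟩ := by
    rw [OrthogonalFamily.linearIsometry_apply]
    refine tsum_congr fun q => ?_
    simp only [mono, hc, LinearIsometry.toSpanSingleton_apply, smul_smul, Nat.choose_symm_add]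
  have h2 := lp.norm_rpow_eq_tsum (p := 2) (by norm_num) (⟨c, hmem⟩ : lp (fun _ : ℕ => ℂ) 2)
  rw [h1, LinearIsometry.norm_map]
  rw [ENNReal.toReal_ofNat, Real.rpow_ofNat] at h2
  rw [h2, ← hb.tsum_eq]
  refine tsum_congr fun q => ?_
  simpa using hcn q

lemma norm_alphaDA_coeff_sq {ε : ℝ} (hε : 0 ≤ ε) (t : ℝ) (k r n q : ℕ) :
    ‖((r + k * q + n).choose n : ℂ) * ε ^ q * Complex.exp (-(Complex.I * q * t))‖ ^ 2 *
      ((r + k * q + n).choose n : ℝ)⁻¹ = ((r + k * q + n).choose n : ℝ) * ε ^ (2 * q) := by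
  have hc : ((r + k * q + n).choose n : ℝ) ≠ 0 := by
    exact_mod_cast (Nat.choose_pos (Nat.le_add_left _ _)).ne'
  have he : ‖Complex.exp (-(Complex.I * q * t))‖ = 1 := by simp [Complex.norm_exp]
  rw [norm_mul, norm_mul, he, norm_pow, Complex.norm_real, Real.norm_of_nonneg hε,
    Complex.norm_natCast]
  field_simp
  ring

/-- with `f_{r,n} = A_{r,n}`, the ratio `‖δ̇_{r,n}(t)‖/‖δ_{r,n}(t)‖` equals
`(f² − 2fA + B)^{1/2} = (B − A²)^{1/2}`, which is unbounded in `n`, growing like `n^{1/2}`. -/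
theorem statement17 (k : ℕ) (hk : 1 ≤ k) (ε t : ℝ) (hε0 : 0 < ε) (hε1 : ε < 1)
    (r : ℕ) (hr : r ≤ k - 1) :
    (∀ n : ℕ, ‖deltaDot k r n ε t‖ / ‖deltaSec k r n ε t‖
        = Real.sqrt ((momA k ε r n) ^ 2 - 2 * momA k ε r n * momA k ε r n + momB k ε r n)) ∧
    (∀ n : ℕ, Real.sqrt ((momA k ε r n) ^ 2 - 2 * momA k ε r n * momA k ε r n + momB k ε r n)
        = Real.sqrt (momB k ε r n - (momA k ε r n) ^ 2)) ∧
    (∃ C : ℝ, C ≠ 0 ∧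
      Tendsto (fun n : ℕ => Real.sqrt (momB k ε r n - (momA k ε r n) ^ 2) / Real.sqrt n)
        atTop (nhds C)) := by
  have hrk : r < k := by omega
  have hk0 : k ≠ 0 := by omega
  obtain ⟨s, hs0, hs1, hs⟩ : ∃ s : ℝ, 0 < s ∧ s < 1 ∧ s ^ k = ε ^ 2 :=
    ⟨(ε ^ 2) ^ (k : ℝ)⁻¹, by positivity,
      Real.rpow_lt_one (by positivity) (by nlinarith) (by positivity),
      Real.rpow_inv_natCast_pow (by positivity) hk0⟩
  refine ⟨fun n => ?_, fun n => by ring_nf, ?_⟩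
  · obtain ⟨h0, h1, h2⟩ := hasSum_weight_moments hs0 hs1 hrk hs n
    have hW := div_pos (residueMoment_zero_pos hs0 hs1 hrk n) (pow_pos hs0 r)
    have hA : momA k ε r n = _ / _ := congrArg₂ (· / ·) h1.tsum_eq h0.tsum_eq
    have hB : momB k ε r n = _ / _ := congrArg₂ (· / ·) h2.tsum_eq h0.tsum_eq
    have hexp : ‖Complex.exp (Complex.I * (momA k ε r n : ℝ) * t)‖ = 1 := by
      simp [Complex.norm_exp]
    have hα : ‖deltaSec k r n ε t‖ ^ 2 = residueMoment k s r n 0 / s ^ r := by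
      rw [deltaSec, norm_smul, hexp, one_mul]
      exact norm_mono_tsum_sq k r n hk0 _
        (h0.congr_fun fun q => norm_alphaDA_coeff_sq hε0.le t k r n q)
    have hδ : ‖deltaDot k r n ε t‖ ^ 2 = _ :=
      norm_mono_tsum_sq k r n hk0 _
        (HasSum.congr_fun (((h0.mul_left (momA k ε r n ^ 2)).sub
          (h1.mul_left (2 * momA k ε r n))).add h2) fun q => by
          have hq : ‖Complex.I * ((momA k ε r n : ℂ) - q)‖ ^ 2 = (momA k ε r n - q) ^ 2 := by
            rw [norm_mul, Complex.norm_I, one_mul, ← Complex.ofReal_natCast,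
              ← Complex.ofReal_sub, Complex.norm_real, Real.norm_eq_abs, sq_abs]
          rw [norm_mul, norm_mul, hexp, mul_one, mul_pow, hq, mul_assoc,
            norm_alphaDA_coeff_sq hε0.le]
          ring)
    rw [← Real.sqrt_sq (div_nonneg (norm_nonneg _) (norm_nonneg _)), div_pow, hα, hδ, hB]
    congr 1
    rw [mul_assoc 2, add_div, sub_div, mul_div_cancel_right₀ _ hW.ne', mul_assoc 2, mul_div_assoc,
      mul_div_assoc, ← hA]
  · refine ⟨Real.sqrt (s / (1 - s) ^ 2 / k ^ 2), ?_, ?_⟩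
    · have := sub_pos.mpr hs1
      positivity
    · refine ((tendsto_variance_of_residueMoment hs0 hs1 hrk).div_const _).sqrt.congr fun n => ?_
      rw [momB_sub_momA_sq hs0 hs1 hrk hs, ← Real.sqrt_div' _ n.cast_nonneg, div_right_comm]

end
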